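/- Let N ≥ 3, b < 2, b ≠ 0, and set C_b = (b/4)(1 - b/4)(N-2)², A_{ij}(y) = δ_{ij} + (b²/4 - b) y_i y_j/|y|². Suppose u is a C² function on ℝ^N \ {0} and v is C² on ℝ^N \ {0} related by u(x) = |x|^{-(b/4)(N-2)} v(|x|^{-b/2}x). Then with y = |x|^{-b/2}x, Δ_x u(x) = |y|^{-b(N+2)/(2(2-b))} ( ∑_{i,j} ∂/∂y_j ( A_{ij}(y) ∂v/∂y_i ) - (C_b/|y|²) v ). -/

import Mathlib

open MeasureTheory

/-!
Put `a = -b/2`, `y = |x|^a x` and `c = a(N-2)/2`. The derivative of `x ↦ |x|^a x` is `|x|^a` times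
the identity plus a rank-one radial term, and `x` is an eigenvector of it, so by the product and
chain rules `Δ(|x|^c v(|x|^a x))` equals `|x|^{c+2a}` times
`Δv + |y|⁻² (a(a+2) D²v(y,y) + (a(a+N) + 2c(a+1)) Dv(y) + c(c+N-2) v)`, evaluated at `y`.
On the other side, `div((I + γ y yᵀ/|y|²) ∇v) = Δv + γ |y|⁻² (D²v(y,y) + (N-1) Dv(y))`. Matching the
second-order radial terms forces `γ = a(a+2) = b²/4 - b`; the value of `c` is exactly the one for
which the first-order radial terms then agree, and the remaining potential is `c(c+N-2) = -C_b`.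
-/

section SecondDerivative

variable {E F G : Type*} [NormedAddCommGroup E] [NormedSpace ℝ E] [NormedAddCommGroup F]
  [NormedSpace ℝ F] [NormedAddCommGroup G] [NormedSpace ℝ G] {x : E}

theorem differentiableAt_fderiv_of_contDiffAt_two {f : E → F} (hf : ContDiffAt ℝ 2 f x) :
    DifferentiableAt ℝ (fderiv ℝ f) x :=
  (hf.fderiv_right (m := 1) (by norm_num)).differentiableAt one_ne_zero

theorem eventually_differentiableAt_of_contDiffAt_two {f : E → F} (hf : ContDiffAt ℝ 2 f x) :
    ∀ᶠ z in nhds x, DifferentiableAt ℝ f z :=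
  (hf.eventually (by simp)).mono fun _ hz => hz.differentiableAt two_ne_zero

theorem fderiv_apply_const {L : E → F →L[ℝ] G} (hL : DifferentiableAt ℝ L x) (h : E) (k : F) :
    fderiv ℝ (fun z => L z k) x h = fderiv ℝ L x h k := by
  simp [fderiv_clm_apply hL (differentiableAt_const k)]

theorem fderiv_fderiv_smul_apply {f : E → ℝ} {g : E → F} (hf : ContDiffAt ℝ 2 f x)
    (hg : ContDiffAt ℝ 2 g x) (h k : E) :
    fderiv ℝ (fderiv ℝ fun z => f z • g z) x h k =
      f x • fderiv ℝ (fderiv ℝ g) x h k + fderiv ℝ f x h • fderiv ℝ g x k +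
        fderiv ℝ f x k • fderiv ℝ g x h + fderiv ℝ (fderiv ℝ f) x h k • g x := by
  have hfderiv : fderiv ℝ (fun z => f z • g z) =ᶠ[nhds x]
      fun z => f z • fderiv ℝ g z + ContinuousLinearMap.smulRightL ℝ E F (fderiv ℝ f z) (g z) := by
    filter_upwards [eventually_differentiableAt_of_contDiffAt_two hf,
      eventually_differentiableAt_of_contDiffAt_two hg] with z hfz hgz
    exact fderiv_fun_smul hfz hgz
  have hf' := (hf.differentiableAt two_ne_zero).hasFDerivAt
  have hg' := (hg.differentiableAt two_ne_zero).hasFDerivAt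
  have hf'' := (differentiableAt_fderiv_of_contDiffAt_two hf).hasFDerivAt
  have hg'' := (differentiableAt_fderiv_of_contDiffAt_two hg).hasFDerivAt
  have hsum := (hf'.smul hg'').add
    (((ContinuousLinearMap.smulRightL ℝ E F).hasFDerivAt.comp x hf'').clm_apply hg')
  rw [(hsum.congr_of_eventuallyEq hfderiv).fderiv]
  simp only [Function.comp_apply, add_apply, smul_apply, ContinuousLinearMap.smulRight_apply,
    ContinuousLinearMap.comp_apply, ContinuousLinearMap.smulRightL_apply_apply,
    ContinuousLinearMap.flip_apply]
  abel

theorem fderiv_fderiv_comp_apply {g : F → G} {f : E → F} (hg : ContDiffAt ℝ 2 g (f x))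
    (hf : ContDiffAt ℝ 2 f x) (h k : E) :
    fderiv ℝ (fderiv ℝ (g ∘ f)) x h k =
      fderiv ℝ (fderiv ℝ g) (f x) (fderiv ℝ f x h) (fderiv ℝ f x k) +
        fderiv ℝ g (f x) (fderiv ℝ (fderiv ℝ f) x h k) := by
  have hfderiv : fderiv ℝ (g ∘ f) =ᶠ[nhds x]
      fun z => (fderiv ℝ g (f z)).comp (fderiv ℝ f z) := by
    filter_upwards [eventually_differentiableAt_of_contDiffAt_two hf,
      hf.continuousAt.eventually (eventually_differentiableAt_of_contDiffAt_two hg)] with z hfz hgz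
    exact fderiv_comp z hgz hfz
  have hg'' := (differentiableAt_fderiv_of_contDiffAt_two hg).hasFDerivAt.comp x
    (hf.differentiableAt two_ne_zero).hasFDerivAt
  have hf'' := (differentiableAt_fderiv_of_contDiffAt_two hf).hasFDerivAt
  rw [((hg''.clm_comp hf'').congr_of_eventuallyEq hfderiv).fderiv]
  simp [add_comm]

end SecondDerivative

theorem sum_inner_smul_map {E F ι : Type*} [NormedAddCommGroup E] [InnerProductSpace ℝ E]
    [NormedAddCommGroup F] [NormedSpace ℝ F] [Fintype ι] (e : OrthonormalBasis ι ℝ E)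
    (L : E →L[ℝ] F) (x : E) : ∑ i, inner ℝ (e i) x • L (e i) = L x := by
  conv_rhs => rw [← e.sum_repr' x, map_sum]
  simp only [map_smul]

section NormPower

theorem norm_rpow_neg_two {E : Type*} [NormedAddCommGroup E] (x : E) :
    ‖x‖ ^ (-2 : ℝ) = (‖x‖ ^ 2)⁻¹ := by
  rw [Real.rpow_neg (norm_nonneg x), Real.rpow_two]

theorem norm_rpow_sub_two {E : Type*} [NormedAddCommGroup E] {x : E} (p : ℝ) (hx : x ≠ 0) :
    ‖x‖ ^ (p - 2) = ‖x‖ ^ p / ‖x‖ ^ 2 :=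
  mod_cast Real.rpow_sub_natCast (norm_ne_zero_iff.mpr hx) p 2

variable {E : Type*} [NormedAddCommGroup E] [InnerProductSpace ℝ E] {x : E}

theorem contDiffAt_norm_rpow (p : ℝ) {n : WithTop ℕ∞} (hx : x ≠ 0) :
    ContDiffAt ℝ n (fun z : E => ‖z‖ ^ p) x :=
  (contDiffAt_norm ℝ hx).rpow_const_of_ne (norm_ne_zero_iff.mpr hx)

theorem hasFDerivAt_norm_rpow_of_ne_zero (p : ℝ) (hx : x ≠ 0) :
    HasFDerivAt (fun z : E => ‖z‖ ^ p) ((p * ‖x‖ ^ (p - 2)) • innerSL ℝ x) x := by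
  have hsq := (hasStrictFDerivAt_norm_sq x).hasFDerivAt.rpow_const (p := p / 2)
    (Or.inl (by positivity))
  have hpow (q : ℝ) (z : E) : (‖z‖ ^ 2) ^ q = ‖z‖ ^ (2 * q) := by
    rw [Real.rpow_mul (norm_nonneg z), Real.rpow_two]
  simp only [hpow] at hsq
  convert! hsq using 1
  · ring_nf
  · rw [← Nat.cast_smul_eq_nsmul ℝ, smul_smul]
    ring_nf

theorem fderiv_norm_rpow_apply_self (p : ℝ) (hx : x ≠ 0) :
    fderiv ℝ (fun z : E => ‖z‖ ^ p) x x = p * ‖x‖ ^ p := by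
  rw [(hasFDerivAt_norm_rpow_of_ne_zero p hx).fderiv, norm_rpow_sub_two p hx]
  have : ‖x‖ ≠ 0 := norm_ne_zero_iff.mpr hx
  simp only [smul_apply, innerSL_apply_apply, real_inner_self_eq_norm_sq, smul_eq_mul]
  field_simp

variable {ι F : Type*} [NormedAddCommGroup F] [NormedSpace ℝ F] [Fintype ι]
  (e : OrthonormalBasis ι ℝ E)

theorem sum_fderiv_smul_innerSL {f : E → ℝ} (hf : DifferentiableAt ℝ f x) :
    ∑ i, fderiv ℝ (fun z => f z • innerSL ℝ z) x (e i) (e i) =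
      fderiv ℝ f x x + Module.finrank ℝ E * f x := by
  have hderiv : HasFDerivAt (fun z => f z • innerSL ℝ z) _ x :=
    hf.hasFDerivAt.smul (innerSL ℝ (E := E)).hasFDerivAt
  rw [hderiv.fderiv, ← sum_inner_smul_map e (fderiv ℝ f x) x]
  have hself (i : ι) : innerSL ℝ (e i) (e i) = 1 := by simp
  simp [hself, Finset.sum_add_distrib, Module.finrank_eq_card_basis e.toBasis, real_inner_comm,
    mul_comm, add_comm]

theorem sum_fderiv_norm_rpow_smul_map (p : ℝ) (hx : x ≠ 0) (L : E →L[ℝ] F) :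
    ∑ i, fderiv ℝ (fun z : E => ‖z‖ ^ p) x (e i) • L (e i) = (p / ‖x‖ ^ 2 * ‖x‖ ^ p) • L x := by
  rw [(hasFDerivAt_norm_rpow_of_ne_zero p hx).fderiv, ← sum_inner_smul_map e L x, Finset.smul_sum]
  congr! 1 with i
  rw [smul_apply, innerSL_apply_apply, norm_rpow_sub_two p hx, real_inner_comm,
    smul_eq_mul, smul_smul]
  ring_nf

end NormPower

section RadialStretch

variable {E : Type*} [NormedAddCommGroup E] [InnerProductSpace ℝ E] {x : E}

/-- The radial map `x ↦ |x|^a x`, homogeneous of degree `a + 1`; the change of variables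
`y = |x|^{-b/2} x` is the case `a = -b/2`. -/
noncomputable def radialStretch (a : ℝ) (x : E) : E := ‖x‖ ^ a • x

theorem radialStretch_ne_zero (a : ℝ) (hx : x ≠ 0) : radialStretch a x ≠ 0 :=
  smul_ne_zero (Real.rpow_pos_of_pos (norm_pos_iff.mpr hx) a).ne' hx

theorem norm_radialStretch (a : ℝ) (x : E) : ‖radialStretch a x‖ = ‖x‖ ^ a * ‖x‖ := by
  rw [radialStretch, norm_smul, Real.norm_of_nonneg (by positivity)]

theorem norm_radialStretch_rpow (a p : ℝ) (hx : x ≠ 0) :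
    ‖radialStretch a x‖ ^ p = ‖x‖ ^ ((a + 1) * p) := by
  rw [norm_radialStretch, ← Real.rpow_add_one (norm_ne_zero_iff.mpr hx),
    Real.rpow_mul (norm_nonneg x)]

theorem contDiffAt_radialStretch (a : ℝ) {n : WithTop ℕ∞} (hx : x ≠ 0) :
    ContDiffAt ℝ n (radialStretch a) x :=
  (contDiffAt_norm_rpow a hx).smul contDiffAt_id

theorem fderiv_radialStretch_apply (a : ℝ) (hx : x ≠ 0) (h : E) :
    fderiv ℝ (radialStretch a) x h = ‖x‖ ^ a • (h + (a * inner ℝ x h / ‖x‖ ^ 2) • x) := by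
  have hderiv : HasFDerivAt (radialStretch a) _ x :=
    (hasFDerivAt_norm_rpow_of_ne_zero a hx).smul (hasFDerivAt_id x)
  rw [hderiv.fderiv, norm_rpow_sub_two a hx]
  simp only [add_apply, smul_apply, ContinuousLinearMap.id_apply,
    ContinuousLinearMap.smulRight_apply, innerSL_apply_apply, smul_eq_mul]
  module

theorem fderiv_radialStretch_apply_self (a : ℝ) (hx : x ≠ 0) :
    fderiv ℝ (radialStretch a) x x = (a + 1) • radialStretch a x := by
  have : ‖x‖ ≠ 0 := norm_ne_zero_iff.mpr hx
  rw [fderiv_radialStretch_apply a hx, real_inner_self_eq_norm_sq,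
    mul_div_cancel_right₀ _ (by positivity), radialStretch]
  module

variable {F ι : Type*} [NormedAddCommGroup F] [NormedSpace ℝ F] [Fintype ι]
  (e : OrthonormalBasis ι ℝ E)

theorem sum_apply_fderiv_radialStretch (a : ℝ) (hx : x ≠ 0) (B : E →L[ℝ] E →L[ℝ] F) :
    ∑ i, B (fderiv ℝ (radialStretch a) x (e i)) (fderiv ℝ (radialStretch a) x (e i)) =
      (‖x‖ ^ a) ^ 2 • (∑ i, B (e i) (e i) + (a * (a + 2) / ‖x‖ ^ 2) • B x x) := by
  have hright := sum_inner_smul_map e (B x) x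
  have hleft : ∑ i, inner ℝ (e i) x • B (e i) x = B x x := sum_inner_smul_map e (B.flip x) x
  have hquad : ‖x‖ ^ 2 * (a / ‖x‖ ^ 2) ^ 2 = a ^ 2 / ‖x‖ ^ 2 := by
    have : ‖x‖ ≠ 0 := norm_ne_zero_iff.mpr hx
    field_simp
  calc _ = ∑ i, (‖x‖ ^ a) ^ 2 • (B (e i) (e i) +
        (a / ‖x‖ ^ 2) • (inner ℝ (e i) x • B x (e i)) +
        (a / ‖x‖ ^ 2) • (inner ℝ (e i) x • B (e i) x) +
        (inner ℝ x (e i) ^ 2 * (a / ‖x‖ ^ 2) ^ 2) • B x x) := by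
          congr! 1 with i
          rw [fderiv_radialStretch_apply a hx]
          simp only [smul_add, map_add, map_smul, add_apply, smul_apply, real_inner_comm]
          module
    _ = _ := by
      rw [← Finset.smul_sum]
      simp only [Finset.sum_add_distrib, ← Finset.smul_sum, ← Finset.sum_smul, ← Finset.sum_mul,
        hright, hleft, e.sum_sq_inner_left, hquad]
      module

end RadialStretch

section LaplacianCalculus

open InnerProductSpace Laplacian Module

variable {E F G ι : Type*} [NormedAddCommGroup E] [InnerProductSpace ℝ E] [FiniteDimensional ℝ E]
  [NormedAddCommGroup F] [NormedSpace ℝ F] [NormedAddCommGroup G] [NormedSpace ℝ G] [Fintype ι]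
  (e : OrthonormalBasis ι ℝ E) {x : E}

theorem laplacian_eq_sum_fderiv_fderiv (f : E → F) (x : E) :
    Δ f x = ∑ i, fderiv ℝ (fderiv ℝ f) x (e i) (e i) := by
  simp [laplacian_eq_iteratedFDeriv_orthonormalBasis f e, iteratedFDeriv_two_apply]

theorem sum_fderiv_fderiv_apply_eq_laplacian {f : E → F} (hf : ContDiffAt ℝ 2 f x) :
    ∑ i, fderiv ℝ (fun z => fderiv ℝ f z (e i)) x (e i) = Δ f x := by
  rw [laplacian_eq_sum_fderiv_fderiv e]
  exact Finset.sum_congr rfl fun i _ =>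
    fderiv_apply_const (differentiableAt_fderiv_of_contDiffAt_two hf) (e i) (e i)

theorem laplacian_smul_apply {f : E → ℝ} {g : E → F} (hf : ContDiffAt ℝ 2 f x)
    (hg : ContDiffAt ℝ 2 g x) :
    Δ (fun z => f z • g z) x =
      f x • Δ g x + (2 : ℝ) • ∑ i, fderiv ℝ f x (e i) • fderiv ℝ g x (e i) + Δ f x • g x := by
  simp only [laplacian_eq_sum_fderiv_fderiv e, fderiv_fderiv_smul_apply hf hg,
    Finset.sum_add_distrib, Finset.smul_sum, Finset.sum_smul]
  simp only [two_smul, Finset.sum_add_distrib]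
  abel

theorem laplacian_comp_apply {g : F → G} {f : E → F} (hg : ContDiffAt ℝ 2 g (f x))
    (hf : ContDiffAt ℝ 2 f x) :
    Δ (g ∘ f) x =
      ∑ i, fderiv ℝ (fderiv ℝ g) (f x) (fderiv ℝ f x (e i)) (fderiv ℝ f x (e i)) +
        fderiv ℝ g (f x) (Δ f x) := by
  simp only [laplacian_eq_sum_fderiv_fderiv e, fderiv_fderiv_comp_apply hg hf,
    Finset.sum_add_distrib, map_sum]

theorem laplacian_norm_rpow (p : ℝ) (hx : x ≠ 0) :
    Δ (fun z : E => ‖z‖ ^ p) x = p * (p + finrank ℝ E - 2) / ‖x‖ ^ 2 * ‖x‖ ^ p := by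
  have hfderiv : fderiv ℝ (fun z : E => ‖z‖ ^ p) =ᶠ[nhds x]
      fun z => (p * ‖z‖ ^ (p - 2)) • innerSL ℝ z := by
    filter_upwards [isOpen_ne.mem_nhds hx] with z hz
    exact (hasFDerivAt_norm_rpow_of_ne_zero p hz).fderiv
  have hdiff := (contDiffAt_norm_rpow (p - 2) (n := 1) hx).differentiableAt one_ne_zero
  rw [laplacian_eq_sum_fderiv_fderiv (stdOrthonormalBasis ℝ E), hfderiv.fderiv_eq,
    sum_fderiv_smul_innerSL _ (hdiff.const_mul p), fderiv_const_mul hdiff]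
  simp only [smul_apply, fderiv_norm_rpow_apply_self _ hx,
    norm_rpow_sub_two p hx, smul_eq_mul]
  ring

theorem laplacian_norm_rpow_smul {g : E → F} (p : ℝ) (hx : x ≠ 0) (hg : ContDiffAt ℝ 2 g x) :
    Δ (fun z => ‖z‖ ^ p • g z) x = ‖x‖ ^ p • (Δ g x + (2 * p / ‖x‖ ^ 2) • fderiv ℝ g x x +
      (p * (p + finrank ℝ E - 2) / ‖x‖ ^ 2) • g x) := by
  rw [laplacian_smul_apply (stdOrthonormalBasis ℝ E) (contDiffAt_norm_rpow p hx) hg,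
    sum_fderiv_norm_rpow_smul_map _ p hx, laplacian_norm_rpow p hx]
  module

theorem laplacian_radialStretch (a : ℝ) (hx : x ≠ 0) :
    Δ (radialStretch a : E → E) x = (a * (a + finrank ℝ E) / ‖x‖ ^ 2) • radialStretch a x := by
  have hid : Δ (id : E → E) x = 0 := by
    have hfderiv : fderiv ℝ (id : E → E) = fun _ => .id ℝ E := funext fun _ => fderiv_id
    simp [laplacian_eq_sum_fderiv_fderiv (stdOrthonormalBasis ℝ E), hfderiv]
  have hmul := laplacian_norm_rpow_smul a hx (contDiffAt_id (𝕜 := ℝ) (E := E))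
  simp only [hid, fderiv_id] at hmul
  refine hmul.trans ?_
  simp only [ContinuousLinearMap.id_apply, id_eq, radialStretch]
  module

theorem laplacian_comp_radialStretch {v : E → F} (a : ℝ) (hx : x ≠ 0)
    (hv : ContDiffAt ℝ 2 v (radialStretch a x)) :
    Δ (v ∘ radialStretch a) x = (‖x‖ ^ a) ^ 2 • Δ v (radialStretch a x) +
      (a * (a + 2) / ‖x‖ ^ 2) •
        fderiv ℝ (fderiv ℝ v) (radialStretch a x) (radialStretch a x) (radialStretch a x) +
      (a * (a + finrank ℝ E) / ‖x‖ ^ 2) •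
        fderiv ℝ v (radialStretch a x) (radialStretch a x) := by
  have e := stdOrthonormalBasis ℝ E
  have hhess (B : E →L[ℝ] E →L[ℝ] F) :
      B (radialStretch a x) (radialStretch a x) = (‖x‖ ^ a) ^ 2 • B x x := by
    simp [radialStretch, smul_smul, sq]
  rw [laplacian_comp_apply e hv (contDiffAt_radialStretch a hx),
    sum_apply_fderiv_radialStretch e a hx, laplacian_radialStretch a hx,
    laplacian_eq_sum_fderiv_fderiv e v, map_smul, hhess]
  module

theorem laplacian_norm_rpow_smul_comp_radialStretch {v : E → F} (a c : ℝ) (hx : x ≠ 0)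
    (hv : ContDiffAt ℝ 2 v (radialStretch a x)) :
    Δ (fun z => ‖z‖ ^ c • v (radialStretch a z)) x =
      ‖x‖ ^ c • ((‖x‖ ^ a) ^ 2 • Δ v (radialStretch a x) + (‖x‖ ^ 2)⁻¹ • (
        (a * (a + 2)) •
          fderiv ℝ (fderiv ℝ v) (radialStretch a x) (radialStretch a x) (radialStretch a x) +
        (a * (a + finrank ℝ E) + 2 * c * (a + 1)) •
          fderiv ℝ v (radialStretch a x) (radialStretch a x) +
        (c * (c + finrank ℝ E - 2)) • v (radialStretch a x))) := by
  have hstretch := contDiffAt_radialStretch (n := 2) a hx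
  have hradial : fderiv ℝ (v ∘ radialStretch a) x x =
      (a + 1) • fderiv ℝ v (radialStretch a x) (radialStretch a x) := by
    rw [fderiv_comp x (hv.differentiableAt two_ne_zero) (hstretch.differentiableAt two_ne_zero),
      ContinuousLinearMap.comp_apply, fderiv_radialStretch_apply_self a hx, map_smul]
  refine (laplacian_norm_rpow_smul c hx (hv.comp x hstretch)).trans ?_
  rw [laplacian_comp_radialStretch a hx hv, hradial, Function.comp_apply]
  module

end LaplacianCalculus

section RadialFlux

open InnerProductSpace Laplacian Module

variable {E ι : Type*} [NormedAddCommGroup E] [InnerProductSpace ℝ E] {x y : E}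

/-- The flux `A(w) ∇v(w)` of the coefficient field `A(w) = I + γ w wᵀ / |w|²`, written as a covector
so that its `j`-th component is its value at the `j`-th basis vector. -/
noncomputable def radialFlux (γ : ℝ) (v : E → ℝ) (w : E) : E →L[ℝ] ℝ :=
  fderiv ℝ v w + (γ * fderiv ℝ v w w / ‖w‖ ^ 2) • innerSL ℝ w

variable [Fintype ι] (e : OrthonormalBasis ι ℝ E)

theorem sum_coeff_mul_fderiv_eq_radialFlux [DecidableEq ι] (γ : ℝ) (v : E → ℝ) (w : E) (j : ι) :
    ∑ i, ((if i = j then (1 : ℝ) else 0) + γ * e.repr w i * e.repr w j / ‖w‖ ^ 2) *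
      fderiv ℝ v w (e i) = radialFlux γ v w (e j) := by
  have hradial := sum_inner_smul_map e (fderiv ℝ v w) w
  calc _ = fderiv ℝ v w (e j) +
        γ * (∑ i, inner ℝ (e i) w • fderiv ℝ v w (e i)) / ‖w‖ ^ 2 * inner ℝ w (e j) := by
        simp only [add_mul, ite_mul, one_mul, zero_mul, Finset.sum_add_distrib, Finset.sum_ite_eq',
          Finset.mem_univ, if_true, Finset.mul_sum, Finset.sum_div, Finset.sum_mul,
          e.repr_apply_apply, smul_eq_mul, real_inner_comm (e j) w]
        congr! 2 with i
        ring
    _ = _ := by rw [hradial]; simp [radialFlux]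

theorem differentiableAt_fderiv_apply_self_div_norm_sq {v : E → ℝ} (γ : ℝ) (hy : y ≠ 0)
    (hv : ContDiffAt ℝ 2 v y) :
    DifferentiableAt ℝ (fun w => γ * fderiv ℝ v w w / ‖w‖ ^ 2) y := by
  have hself := (differentiableAt_fderiv_of_contDiffAt_two hv).clm_apply differentiableAt_fun_id
  simpa only [norm_rpow_neg_two, ← div_eq_mul_inv] using
    (hself.const_mul γ).fun_mul (hasFDerivAt_norm_rpow_of_ne_zero (-2) hy).differentiableAt

theorem fderiv_fderiv_apply_self_div_norm_sq_apply_self {v : E → ℝ} (γ : ℝ) (hy : y ≠ 0)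
    (hv : ContDiffAt ℝ 2 v y) :
    fderiv ℝ (fun w => γ * fderiv ℝ v w w / ‖w‖ ^ 2) y y =
      γ / ‖y‖ ^ 2 * (fderiv ℝ (fderiv ℝ v) y y y - fderiv ℝ v y y) := by
  have hquot : (fun w => γ * fderiv ℝ v w w / ‖w‖ ^ 2) =
      fun w => γ * fderiv ℝ v w w * ‖w‖ ^ (-2 : ℝ) := by
    simp only [norm_rpow_neg_two, div_eq_mul_inv]
  have hv' := differentiableAt_fderiv_of_contDiffAt_two hv
  have hself : DifferentiableAt ℝ (fun w => fderiv ℝ v w w) y := hv'.clm_apply differentiableAt_id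
  have hfderiv : fderiv ℝ (fun w => fderiv ℝ v w w) y y =
      fderiv ℝ v y y + fderiv ℝ (fderiv ℝ v) y y y := by
    simp [fderiv_clm_apply hv' differentiableAt_fun_id]
  rw [hquot, fderiv_fun_mul (hself.const_mul γ)
    (hasFDerivAt_norm_rpow_of_ne_zero (-2) hy).differentiableAt, fderiv_const_mul hself]
  simp only [add_apply, smul_apply, smul_eq_mul, hfderiv, fderiv_norm_rpow_apply_self _ hy]
  rw [norm_rpow_neg_two]
  ring

variable [FiniteDimensional ℝ E]

theorem sum_fderiv_radialFlux {v : E → ℝ} (γ : ℝ) (hy : y ≠ 0) (hv : ContDiffAt ℝ 2 v y) :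
    ∑ j, fderiv ℝ (fun w => radialFlux γ v w (e j)) y (e j) =
      Δ v y + γ / ‖y‖ ^ 2 *
        (fderiv ℝ (fderiv ℝ v) y y y + (finrank ℝ E - 1) * fderiv ℝ v y y) := by
  have hv' := differentiableAt_fderiv_of_contDiffAt_two hv
  have hcoeff := differentiableAt_fderiv_apply_self_div_norm_sq γ hy hv
  have hradial := hcoeff.fun_smul (innerSL ℝ (E := E)).differentiableAt
  have hflux : DifferentiableAt ℝ (radialFlux γ v) y := hv'.add hradial
  have hfderiv : fderiv ℝ (radialFlux γ v) y = fderiv ℝ (fderiv ℝ v) y +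
      fderiv ℝ (fun w => (γ * fderiv ℝ v w w / ‖w‖ ^ 2) • innerSL ℝ w) y :=
    fderiv_add hv' hradial
  simp only [fderiv_apply_const hflux, hfderiv, add_apply, Finset.sum_add_distrib,
    sum_fderiv_smul_innerSL e hcoeff, ← laplacian_eq_sum_fderiv_fderiv e v,
    fderiv_fderiv_apply_self_div_norm_sq_apply_self γ hy hv]
  ring

theorem laplacian_norm_rpow_mul_comp_radialStretch {v : E → ℝ} (a : ℝ) (hx : x ≠ 0)
    (hy : y = radialStretch a x) (hv : ContDiffAt ℝ 2 v y) {c : ℝ}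
    (hc : c = a / 2 * (finrank ℝ E - 2)) :
    Δ (fun z => ‖z‖ ^ c * v (radialStretch a z)) x = ‖x‖ ^ c * (‖x‖ ^ a) ^ 2 *
      (∑ j, fderiv ℝ (fun w => radialFlux (a * (a + 2)) v w (e j)) y (e j) +
        c * (c + finrank ℝ E - 2) / ‖y‖ ^ 2 * v y) := by
  have hnorm : (‖x‖ ^ 2)⁻¹ = (‖x‖ ^ a) ^ 2 / ‖y‖ ^ 2 := by
    have : 0 < ‖x‖ := norm_pos_iff.mpr hx
    rw [hy, norm_radialStretch]
    field_simp
  -- The choice of `c` makes the first-order radial terms of the two sides agree.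
  have hdrift : a * (a + finrank ℝ E) + 2 * c * (a + 1) = a * (a + 2) * (finrank ℝ E - 1) := by
    rw [hc]
    ring
  have hlap := laplacian_norm_rpow_smul_comp_radialStretch a c hx (hy ▸ hv)
  rw [← hy, hnorm, hdrift] at hlap
  refine hlap.trans ?_
  rw [sum_fderiv_radialFlux e _ (hy ▸ radialStretch_ne_zero a hx) hv]
  simp only [smul_eq_mul]
  ring

end RadialFlux

open Module in
theorem laplacian_transformation_general {E ι : Type*} [NormedAddCommGroup E]
    [InnerProductSpace ℝ E] [FiniteDimensional ℝ E] [Fintype ι] [DecidableEq ι]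
    (e : OrthonormalBasis ι ℝ E) {N : ℕ} (hN : finrank ℝ E = N) {b : ℝ} (hb : b ≠ 2)
    {u v : E → ℝ} {x y : E} (hx : x ≠ 0) (hy : y = ‖x‖ ^ (-(b / 2)) • x)
    (hv : ContDiffAt ℝ 2 v y)
    (hrel : ∀ᶠ z in nhds x,
      u z = ‖z‖ ^ (-(b / 4) * ((N : ℝ) - 2)) * v (‖z‖ ^ (-(b / 2)) • z)) :
    ∑ i, fderiv ℝ (fun z => fderiv ℝ u z (e i)) x (e i) =
      ‖y‖ ^ (-(b * ((N : ℝ) + 2)) / (2 * (2 - b))) *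
        ((∑ j, fderiv ℝ
            (fun w => ∑ i, ((if i = j then (1 : ℝ) else 0) +
              (b ^ 2 / 4 - b) * e.repr w i * e.repr w j / ‖w‖ ^ 2) * fderiv ℝ v w (e i)) y (e j)) -
          (b / 4) * (1 - b / 4) * ((N : ℝ) - 2) ^ 2 / ‖y‖ ^ 2 * v y) := by
  subst hN
  set a := -(b / 2) with ha
  set c := -(b / 4) * ((finrank ℝ E : ℝ) - 2) with hc
  have hy' : y = radialStretch a x := hy
  have hvcomp : ContDiffAt ℝ 2 (v ∘ radialStretch a) x :=
    (hy' ▸ hv).comp x (contDiffAt_radialStretch a hx)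
  have hu : ContDiffAt ℝ 2 u x :=
    ((contDiffAt_norm_rpow c hx).mul hvcomp).congr_of_eventuallyEq hrel
  have hweight : ‖y‖ ^ (-(b * ((finrank ℝ E : ℝ) + 2)) / (2 * (2 - b))) =
      ‖x‖ ^ c * (‖x‖ ^ a) ^ 2 := by
    have : 2 - b ≠ 0 := sub_ne_zero.mpr hb.symm
    rw [hy', norm_radialStretch_rpow _ _ hx, ← Real.rpow_mul_natCast (norm_nonneg x),
      ← Real.rpow_add (norm_pos_iff.mpr hx), ha, hc]
    congr 1
    push_cast
    field_simp
    ring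
  have hγ : b ^ 2 / 4 - b = a * (a + 2) := by rw [ha]; ring
  have hlap := laplacian_norm_rpow_mul_comp_radialStretch e a hx hy' hv
    (show c = a / 2 * (finrank ℝ E - 2) by rw [ha, hc]; ring)
  rw [sum_fderiv_fderiv_apply_eq_laplacian e hu,
    (InnerProductSpace.laplacian_congr_nhds hrel).eq_of_nhds, hweight, hγ]
  simp only [sum_coeff_mul_fderiv_eq_radialFlux]
  refine hlap.trans ?_
  rw [hc]
  ring

/-- Transformation of the Laplacian under `u(x) = |x|^{-(b/4)(N-2)} v(|x|^{-b/2}x)`: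
with `y = |x|^{-b/2}x`, `A_{ij}(y) = δ_{ij} + (b²/4 - b) y_i y_j/|y|²` and
`C_b = (b/4)(1-b/4)(N-2)²`, one has
`Δ_x u(x) = |y|^{-b(N+2)/(2(2-b))} (∑_{i,j} ∂_j(A_{ij}(y) ∂_i v) - (C_b/|y|²) v)`. -/
theorem laplacian_transformation (N : ℕ) (hN : 3 ≤ N) (b : ℝ) (hb2 : b < 2) (hb0 : b ≠ 0)
    (u v : EuclideanSpace ℝ (Fin N) → ℝ)
    (hu : ContDiffOn ℝ 2 u {(0 : EuclideanSpace ℝ (Fin N))}ᶜ)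
    (hv : ContDiffOn ℝ 2 v {(0 : EuclideanSpace ℝ (Fin N))}ᶜ)
    (hrel : ∀ x : EuclideanSpace ℝ (Fin N), x ≠ 0 →
      u x = ‖x‖ ^ (-(b / 4) * ((N : ℝ) - 2)) * v (‖x‖ ^ (-(b / 2)) • x)) :
    ∀ x : EuclideanSpace ℝ (Fin N), x ≠ 0 →
      ∀ y : EuclideanSpace ℝ (Fin N), y = ‖x‖ ^ (-(b / 2)) • x →
      (∑ i : Fin N, fderiv ℝ (fun z => fderiv ℝ u z (EuclideanSpace.single i (1 : ℝ))) x
          (EuclideanSpace.single i (1 : ℝ))) =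
        ‖y‖ ^ (-(b * ((N : ℝ) + 2)) / (2 * (2 - b))) *
          ((∑ j : Fin N, fderiv ℝ
              (fun w => ∑ i : Fin N,
                ((if i = j then (1 : ℝ) else 0) + (b ^ 2 / 4 - b) * w i * w j / ‖w‖ ^ 2) *
                  fderiv ℝ v w (EuclideanSpace.single i (1 : ℝ))) y
              (EuclideanSpace.single j (1 : ℝ))) -
            (b / 4) * (1 - b / 4) * ((N : ℝ) - 2) ^ 2 / ‖y‖ ^ 2 * v y) := by
  intro x hx y hy
  have hy0 : y ≠ 0 := hy ▸ radialStretch_ne_zero (-(b / 2)) hx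
  simpa only [EuclideanSpace.basisFun_apply, EuclideanSpace.basisFun_repr] using
    laplacian_transformation_general (EuclideanSpace.basisFun (Fin N) ℝ) finrank_euclideanSpace_fin
      hb2.ne hx hy (hv.contDiffAt (isOpen_ne.mem_nhds hy0))
      (Filter.eventually_of_mem (isOpen_ne.mem_nhds hx) hrel)
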